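/- arXiv:1312.7860 — 2 statements merged into one kernel-verified Lean document; each statement's English description precedes it below -/
import Mathlib

section
/- Let α_x ≥ 0, α_p > 0, σ_μ ≥ 0, set α = α_x + α_p and α_ψ = α²/(α_x + α_p²·σ_μ²). If √(α_x/α_p² + σ_μ²) ≥ 1/√(2π), then for every x_c ∈ ℝ and every m ∈ ℝ, the equation Φ(√α_ψ·(−x_c/√α + (α_p/α)·θ − (α_p/α)·m)) = θ has exactly one real solution θ*, and θ* ∈ (0,1). -/
/-- The standard normal cumulative distribution function. -/
noncomputable def stdNormalCDF (x : ℝ) : ℝ :=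
  ∫ t in Set.Iic x, (Real.sqrt (2 * Real.pi))⁻¹ * Real.exp (-t ^ 2 / 2)

/-!
Writing `S = √(αx / αp² + σμ²)`, the equilibria are the fixed points of `θ ↦ Φ (A + S⁻¹ θ)` for a
constant `A`. The standard normal density is strictly below its peak value `1 / √(2π)` except at one
point, so when `S ≥ 1 / √(2π)` this map increases strictly slower than the identity, even in the
borderline case, where its slope does reach one. Hence `θ - Φ (A + S⁻¹ θ)` is strictly increasing,
and it changes sign on `[0, 1]` since `Φ` takes values in `(0, 1)`.
-/

section

open MeasureTheory ProbabilityTheory Set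
open scoped NNReal Real

theorem exists_unique_fixedPoint_of_strictMono_id_sub {f : ℝ → ℝ} {a b : ℝ} (hf : Continuous f)
    (hmem : ∀ x, f x ∈ Ioo a b) (hmono : StrictMono fun x ↦ x - f x) :
    ∃ x ∈ Ioo a b, f x = x ∧ ∀ y, f y = y → y = x := by
  have hab : a ≤ b := ((hmem a).1.trans (hmem a).2).le
  obtain ⟨x, -, hx⟩ := exists_mem_Icc_isFixedPt hf.continuousOn hab (hmem a).1.le (hmem b).2.le
  have hfx : f x = x := hx
  refine ⟨x, hfx ▸ hmem x, hfx, fun y hfy ↦ hmono.injective ?_⟩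
  simp only [hfx, hfy, sub_self]

theorem cdf_mem_Ioo (P : Measure ℝ) [IsProbabilityMeasure P] [P.IsOpenPosMeasure] (x : ℝ) :
    cdf P x ∈ Ioo 0 1 := by
  have hIic : 0 < P.real (Iic x) :=
    ENNReal.toReal_pos (P.measure_pos_of_nonempty_interior (by simp)).ne' (measure_ne_top P _)
  have hIoi : 0 < P.real (Ioi x) :=
    ENNReal.toReal_pos (P.measure_Ioi_pos x).ne' (measure_ne_top P _)
  have hsum : P.real (Iic x) + P.real (Ioi x) = 1 := by
    simpa only [compl_Iic] using probReal_add_probReal_compl (μ := P) (measurableSet_Iic (a := x))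
  rw [cdf_eq_real]
  exact ⟨hIic, by linarith⟩

section Gaussian

variable {μ : ℝ} {v : ℝ≥0}

theorem isOpenPosMeasure_gaussianReal (hv : v ≠ 0) : (gaussianReal μ v).IsOpenPosMeasure :=
  (gaussianReal_absolutelyContinuous' μ hv).isOpenPosMeasure

theorem continuous_gaussianPDFReal (μ : ℝ) (v : ℝ≥0) : Continuous (gaussianPDFReal μ v) := by
  rw [gaussianPDFReal_def]
  fun_prop

theorem gaussianPDFReal_lt_of_ne (hv : v ≠ 0) {x : ℝ} (hx : x ≠ μ) :
    gaussianPDFReal μ v x < (√(2 * π * v))⁻¹ := by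
  have hsq : 0 < (x - μ) ^ 2 := sq_pos_of_ne_zero (sub_ne_zero.2 hx)
  refine mul_lt_of_lt_one_right (by positivity) (Real.exp_lt_one_iff.2 ?_)
  exact div_neg_of_neg_of_pos (neg_neg_of_pos hsq) (by positivity)

theorem gaussianPDFReal_le (μ : ℝ) (v : ℝ≥0) (x : ℝ) :
    gaussianPDFReal μ v x ≤ (√(2 * π * v))⁻¹ := by
  refine mul_le_of_le_one_right (by positivity) (Real.exp_le_one_iff.2 ?_)
  exact div_nonpos_of_nonpos_of_nonneg (neg_nonpos.2 (sq_nonneg _)) (by positivity)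

theorem cdf_gaussianReal_eq_integral (hv : v ≠ 0) (x : ℝ) :
    cdf (gaussianReal μ v) x = ∫ t in Iic x, gaussianPDFReal μ v t := by
  rw [cdf_eq_real, measureReal_def, gaussianReal_apply_eq_integral μ hv, ENNReal.toReal_ofReal]
  exact integral_nonneg (gaussianPDFReal_nonneg μ v)

theorem cdf_gaussianReal_sub_eq_intervalIntegral (hv : v ≠ 0) (x y : ℝ) :
    cdf (gaussianReal μ v) y - cdf (gaussianReal μ v) x = ∫ t in x..y, gaussianPDFReal μ v t := by
  have hint := integrable_gaussianPDFReal μ v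
  simp only [cdf_gaussianReal_eq_integral hv]
  exact intervalIntegral.integral_Iic_sub_Iic hint.integrableOn hint.integrableOn

theorem continuous_cdf_gaussianReal (hv : v ≠ 0) : Continuous (cdf (gaussianReal μ v)) := by
  have hprimitive : ⇑(cdf (gaussianReal μ v)) =
      fun x ↦ cdf (gaussianReal μ v) 0 + ∫ t in (0 : ℝ)..x, gaussianPDFReal μ v t := by
    funext x
    rw [← cdf_gaussianReal_sub_eq_intervalIntegral hv, add_sub_cancel]
  rw [hprimitive]
  exact continuous_const.add <| intervalIntegral.continuous_primitive
    (fun _ _ ↦ (integrable_gaussianPDFReal μ v).intervalIntegrable) 0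

theorem cdf_gaussianReal_sub_lt (hv : v ≠ 0) {x y : ℝ} (hxy : x < y) :
    cdf (gaussianReal μ v) y - cdf (gaussianReal μ v) x < (√(2 * π * v))⁻¹ * (y - x) := by
  obtain ⟨t, ht, htμ⟩ := (Icc_infinite hxy).nontrivial.exists_ne μ
  calc cdf (gaussianReal μ v) y - cdf (gaussianReal μ v) x
      = ∫ t in x..y, gaussianPDFReal μ v t := cdf_gaussianReal_sub_eq_intervalIntegral hv x y
    _ < ∫ _ in x..y, (√(2 * π * v))⁻¹ :=
        intervalIntegral.integral_lt_integral_of_continuousOn_of_le_of_exists_lt hxy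
          (continuous_gaussianPDFReal μ v).continuousOn continuousOn_const
          (fun s _ ↦ gaussianPDFReal_le μ v s) ⟨t, ht, gaussianPDFReal_lt_of_ne hv htμ⟩
    _ = (√(2 * π * v))⁻¹ * (y - x) := by
        rw [intervalIntegral.integral_const, smul_eq_mul, mul_comm]

theorem strictMono_id_sub_cdf_gaussianReal_affine (hv : v ≠ 0) (A : ℝ) {k : ℝ}
    (hk : k ≤ √(2 * π * v)) :
    StrictMono fun θ ↦ θ - cdf (gaussianReal μ v) (A + k * θ) := by
  intro x y hxy
  suffices cdf (gaussianReal μ v) (A + k * y) - cdf (gaussianReal μ v) (A + k * x) < y - x by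
    dsimp only
    linarith
  rcases le_or_gt k 0 with hk_nonpos | hk_pos
  · have hle := monotone_cdf (gaussianReal μ v)
      (add_le_add_right (mul_le_mul_of_nonpos_left hxy.le hk_nonpos) A)
    linarith
  · calc cdf (gaussianReal μ v) (A + k * y) - cdf (gaussianReal μ v) (A + k * x)
        < (√(2 * π * v))⁻¹ * (A + k * y - (A + k * x)) :=
          cdf_gaussianReal_sub_lt hv (by gcongr)
      _ = k / √(2 * π * v) * (y - x) := by ring
      _ ≤ 1 * (y - x) := by
          gcongr
          exact div_le_one_of_le₀ hk (by positivity)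
      _ = y - x := one_mul _

theorem exists_unique_fixedPoint_cdf_gaussianReal_affine (hv : v ≠ 0) (A : ℝ) {k : ℝ}
    (hk : k ≤ √(2 * π * v)) :
    ∃ θ ∈ Ioo (0 : ℝ) 1, cdf (gaussianReal μ v) (A + k * θ) = θ ∧
      ∀ θ', cdf (gaussianReal μ v) (A + k * θ') = θ' → θ' = θ := by
  have := isOpenPosMeasure_gaussianReal (μ := μ) hv
  exact exists_unique_fixedPoint_of_strictMono_id_sub
    ((continuous_cdf_gaussianReal hv).comp (by fun_prop)) (fun _ ↦ cdf_mem_Ioo _ _)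
    (strictMono_id_sub_cdf_gaussianReal_affine hv A hk)

end Gaussian

theorem stdNormalCDF_eq_cdf (x : ℝ) : stdNormalCDF x = cdf (gaussianReal 0 1) x := by
  simp only [stdNormalCDF, cdf_gaussianReal_eq_integral one_ne_zero, gaussianPDFReal,
    NNReal.coe_one, mul_one, sub_zero]

theorem sqrt_sq_div_mul_div_eq_inv_sqrt {a p : ℝ} (ha : 0 < a) (hp : 0 < p) (x s : ℝ) :
    √(a ^ 2 / (x + p ^ 2 * s ^ 2)) * (p / a) = (√(x / p ^ 2 + s ^ 2))⁻¹ := by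
  have hfactor : x + p ^ 2 * s ^ 2 = p ^ 2 * (x / p ^ 2 + s ^ 2) := by field_simp
  rw [hfactor, Real.sqrt_div (sq_nonneg a), Real.sqrt_mul (sq_nonneg p), Real.sqrt_sq ha.le,
    Real.sqrt_sq hp.le]
  field_simp

end

theorem stmt_2 (αx αp σμ : ℝ) (hαx : 0 ≤ αx) (hαp : 0 < αp) (hσμ : 0 ≤ σμ)
    (α αψ : ℝ) (hα : α = αx + αp) (hαψ : αψ = α ^ 2 / (αx + αp ^ 2 * σμ ^ 2))
    (h : Real.sqrt (αx / αp ^ 2 + σμ ^ 2) ≥ 1 / Real.sqrt (2 * Real.pi)) :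
    ∀ xc m : ℝ,
      ∃ θ ∈ Set.Ioo (0 : ℝ) 1,
        stdNormalCDF (Real.sqrt αψ *
          (-xc / Real.sqrt α + (αp / α) * θ - (αp / α) * m)) = θ ∧
        ∀ θ' : ℝ,
          stdNormalCDF (Real.sqrt αψ *
            (-xc / Real.sqrt α + (αp / α) * θ' - (αp / α) * m)) = θ' → θ' = θ := by
  intro xc m
  have hα_pos : 0 < α := hα ▸ add_pos_of_nonneg_of_pos hαx hαp
  have hslope : Real.sqrt αψ * (αp / α) = (Real.sqrt (αx / αp ^ 2 + σμ ^ 2))⁻¹ :=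
    hαψ ▸ sqrt_sq_div_mul_div_eq_inv_sqrt hα_pos hαp αx σμ
  have hslope_le : Real.sqrt αψ * (αp / α) ≤ Real.sqrt (2 * Real.pi * (1 : NNReal)) := by
    rw [hslope, NNReal.coe_one, mul_one]
    exact inv_le_of_inv_le₀ (by positivity) (one_div (Real.sqrt (2 * Real.pi)) ▸ h)
  have haffine (θ : ℝ) :
      Real.sqrt αψ * (-xc / Real.sqrt α + (αp / α) * θ - (αp / α) * m) =
        Real.sqrt αψ * (-xc / Real.sqrt α - (αp / α) * m) + Real.sqrt αψ * (αp / α) * θ := by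
    ring
  simp only [stdNormalCDF_eq_cdf, haffine]
  exact exists_unique_fixedPoint_cdf_gaussianReal_affine one_ne_zero _ hslope_le
end

section
/- Let α_p > 0 and σ_μ > 0. (i) If σ_μ > 1/√(2π), then for every x_c ∈ ℝ and m ∈ ℝ the equation Φ((1/σ_μ)·(−x_c/√α_p + θ − m)) = θ has exactly one real solution θ, lying in (0,1). (ii) If σ_μ < 1/√(2π), then there exist x_c ∈ ℝ and m ∈ ℝ such that this equation has at least three distinct solutions θ in (0,1). -/
/-!
An equilibrium is a fixed point of the map `A` sending a conjectured regime threshold `θ` to the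
resulting mass of attackers. The slope of `A` is a normal density with standard deviation `σμ`, so
its maximum is `1 / (σμ * √(2π))`, and `A` takes values in `(0, 1)`. If the maximal slope is less
than one, the mean value theorem leaves room for only one fixed point. If it is greater than one,
choose the mean prior `m` so that the point of maximal slope is itself a fixed point: `A` crosses
the diagonal from below there, hence must cross it again on either side.
-/

open Filter Function MeasureTheory ProbabilityTheory Set Topology
open scoped NNReal

section FixedPoints

theorem exists_mem_Ioo_isFixedPt {α : Type*} [ConditionallyCompleteLinearOrder α]
    [TopologicalSpace α] [OrderTopology α] [DenselyOrdered α] {f : α → α} {a b : α}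
    (hf : ContinuousOn f (Icc a b)) (hab : a ≤ b) (ha : a < f a) (hb : f b < b) :
    ∃ x ∈ Ioo a b, IsFixedPt f x := by
  obtain ⟨x, hx, hfx⟩ := exists_mem_Icc_isFixedPt hf hab ha.le hb.le
  refine ⟨x, ⟨hx.1.lt_of_ne ?_, hx.2.lt_of_ne ?_⟩, hfx⟩
  · rintro rfl
    exact ha.ne' hfx
  · rintro rfl
    exact hb.ne hfx

variable {f : ℝ → ℝ} {a b c : ℝ}

theorem subsingleton_fixedPoints_of_deriv_ne_one (hf : Differentiable ℝ f)
    (hf' : ∀ x, deriv f x ≠ 1) : (fixedPoints f).Subsingleton := by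
  intro x hx y hy
  by_contra hne
  wlog hxy : x < y generalizing x y
  · exact this hy hx (Ne.symm hne) ((Ne.lt_or_gt hne).resolve_left hxy)
  obtain ⟨z, -, hz⟩ :=
    exists_deriv_eq_slope f hxy hf.continuous.continuousOn hf.differentiableOn
  rw [mem_fixedPoints.1 hx, mem_fixedPoints.1 hy, div_self (sub_pos.2 hxy).ne'] at hz
  exact hf' z hz

theorem eventually_sign_sub_self_eq_of_one_lt_deriv (hf' : 1 < deriv f c) (hc : IsFixedPt f c) :
    ∀ᶠ x in 𝓝 c, SignType.sign (f x - x) = SignType.sign (x - c) := by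
  have hdiff : DifferentiableAt ℝ f c :=
    differentiableAt_of_deriv_ne_zero (zero_lt_one.trans hf').ne'
  have hderiv : HasDerivAt (fun x ↦ f x - x) (deriv f c - 1) c :=
    hdiff.hasDerivAt.sub (hasDerivAt_id c)
  exact eventually_nhdsWithin_sign_eq_of_deriv_pos
    (by rw [hderiv.deriv]; exact sub_pos.2 hf') (sub_eq_zero.2 hc)

theorem exists_isFixedPt_lt_and_gt_of_one_lt_deriv (hf : ContinuousOn f (Icc a b))
    (ha : a < f a) (hb : f b < b) (hc : c ∈ Ioo a b) (hfc : IsFixedPt f c)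
    (hf' : 1 < deriv f c) :
    (∃ x ∈ Ioo a c, IsFixedPt f x) ∧ ∃ x ∈ Ioo c b, IsFixedPt f x := by
  have hsign := eventually_sign_sub_self_eq_of_one_lt_deriv hf' hfc
  constructor
  · obtain ⟨u, hu, hau, huc⟩ :=
      ((hsign.filter_mono nhdsWithin_le_nhds).and (Ioo_mem_nhdsLT hc.1)).exists
    have hfu : f u < u := by
      rwa [sign_neg (sub_neg.2 huc), sign_eq_neg_one_iff, sub_neg] at hu
    obtain ⟨x, hx, hfx⟩ := exists_mem_Ioo_isFixedPt
      (hf.mono (Icc_subset_Icc_right (huc.trans hc.2).le)) hau.le ha hfu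
    exact ⟨x, ⟨hx.1, hx.2.trans huc⟩, hfx⟩
  · obtain ⟨v, hv, hcv, hvb⟩ :=
      ((hsign.filter_mono nhdsWithin_le_nhds).and (Ioo_mem_nhdsGT hc.2)).exists
    have hfv : v < f v := by
      rwa [sign_pos (sub_pos.2 hcv), sign_eq_one_iff, sub_pos] at hv
    obtain ⟨x, hx, hfx⟩ := exists_mem_Ioo_isFixedPt
      (hf.mono (Icc_subset_Icc_left (hc.1.trans hcv).le)) hvb.le hfv hb
    exact ⟨x, ⟨hcv.trans hx.1, hx.2⟩, hfx⟩

end FixedPoints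

theorem hasDerivAt_integral_Iic {E : Type*} [NormedAddCommGroup E] [NormedSpace ℝ E]
    [CompleteSpace E] {f : ℝ → E} {x : ℝ} (hf : Integrable f) (hfx : ContinuousAt f x) :
    HasDerivAt (fun y ↦ ∫ t in Iic y, f t) (f x) x := by
  have hsplit : (fun y ↦ ∫ t in Iic y, f t) = fun y ↦ (∫ t in Iic x, f t) + ∫ t in x..y, f t := by
    funext y
    rw [← intervalIntegral.integral_Iic_sub_Iic hf.integrableOn hf.integrableOn, add_sub_cancel]
  rw [hsplit]
  exact (intervalIntegral.integral_hasDerivAt_right hf.intervalIntegrable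
    hf.aestronglyMeasurable.stronglyMeasurableAtFilter hfx).const_add _

theorem measureReal_Iic_mem_Ioo_of_volume_absolutelyContinuous {μ : Measure ℝ}
    [IsProbabilityMeasure μ] (hμ : volume ≪ μ) (x : ℝ) : μ.real (Iic x) ∈ Ioo 0 1 := by
  have pos_of_volume_ne_zero : ∀ {s : Set ℝ}, volume s ≠ 0 → 0 < μ.real s :=
    fun {s} hs ↦ ENNReal.toReal_pos (mt (@hμ s) hs) (measure_ne_top μ s)
  have hIic : 0 < μ.real (Iic x) := pos_of_volume_ne_zero (by simp)
  have hIoi : 0 < μ.real (Iic x)ᶜ := pos_of_volume_ne_zero (by simp)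
  rw [probReal_compl_eq_one_sub measurableSet_Iic] at hIoi
  exact ⟨hIic, sub_pos.1 hIoi⟩

theorem gaussianPDFReal_le_inv_sqrt (μ : ℝ) (v : ℝ≥0) (x : ℝ) :
    gaussianPDFReal μ v x ≤ (√(2 * Real.pi * v))⁻¹ := by
  refine mul_le_of_le_one_right (by positivity) (Real.exp_le_one_iff.2 ?_)
  exact div_nonpos_of_nonpos_of_nonneg (neg_nonpos.2 (sq_nonneg _)) (by positivity)

theorem gaussianPDFReal_self (μ : ℝ) (v : ℝ≥0) :
    gaussianPDFReal μ v μ = (√(2 * Real.pi * v))⁻¹ := by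
  simp [gaussianPDFReal]

theorem stdNormalCDF_eq_integral_gaussianPDFReal (x : ℝ) :
    stdNormalCDF x = ∫ t in Iic x, gaussianPDFReal 0 1 t := by
  simp [stdNormalCDF, gaussianPDFReal]

theorem hasDerivAt_stdNormalCDF (x : ℝ) :
    HasDerivAt stdNormalCDF (gaussianPDFReal 0 1 x) x := by
  have hcont : Continuous (gaussianPDFReal 0 1) := by
    unfold gaussianPDFReal
    fun_prop
  rw [funext stdNormalCDF_eq_integral_gaussianPDFReal]
  exact hasDerivAt_integral_Iic (integrable_gaussianPDFReal 0 1) hcont.continuousAt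

theorem stdNormalCDF_mem_Ioo (x : ℝ) : stdNormalCDF x ∈ Ioo 0 1 := by
  have hmeasure : stdNormalCDF x = (gaussianReal 0 1).real (Iic x) := by
    rw [stdNormalCDF_eq_integral_gaussianPDFReal, measureReal_def,
      gaussianReal_apply_eq_integral 0 one_ne_zero,
      ENNReal.toReal_ofReal (integral_nonneg (gaussianPDFReal_nonneg 0 1))]
  rw [hmeasure]
  exact measureReal_Iic_mem_Ioo_of_volume_absolutelyContinuous
    (gaussianReal_absolutelyContinuous' 0 one_ne_zero) x

/-- The mass of attackers in the heterogeneous-prior global game without private information, when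
everyone expects the regime to fall exactly below the threshold `θ`. An agent with prior mean `μ`
attacks iff `Φ(√αp * (θ - μ)) ≥ Φ(xc)`, i.e. iff `μ ≤ θ - xc / √αp`, and the prior means are
distributed as `N(m, σμ²)`. Equilibria are the fixed points in `θ`. -/
noncomputable def attackMass (αp σμ xc m θ : ℝ) : ℝ :=
  stdNormalCDF ((1 / σμ) * (-xc / √αp + θ - m))

section AttackMass

variable (αp σμ xc m : ℝ)

theorem attackMass_mem_Ioo (θ : ℝ) : attackMass αp σμ xc m θ ∈ Ioo 0 1 :=
  stdNormalCDF_mem_Ioo _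

variable {αp σμ xc m} in
theorem mem_Ioo_of_isFixedPt_attackMass {θ : ℝ} (hθ : IsFixedPt (attackMass αp σμ xc m) θ) :
    θ ∈ Ioo 0 1 :=
  hθ ▸ attackMass_mem_Ioo αp σμ xc m θ

theorem hasDerivAt_attackMass (θ : ℝ) :
    HasDerivAt (attackMass αp σμ xc m)
      (gaussianPDFReal 0 1 ((1 / σμ) * (-xc / √αp + θ - m)) * (1 / σμ)) θ := by
  have haffine : HasDerivAt (fun θ ↦ (1 / σμ) * (-xc / √αp + θ - m)) (1 / σμ) θ := by
    simpa only [mul_one, id] using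
      (((hasDerivAt_id θ).const_add (-xc / √αp)).sub_const m).const_mul (1 / σμ)
  exact (hasDerivAt_stdNormalCDF _).comp θ haffine

theorem differentiable_attackMass : Differentiable ℝ (attackMass αp σμ xc m) :=
  fun θ ↦ (hasDerivAt_attackMass αp σμ xc m θ).differentiableAt

variable {σμ}

theorem deriv_attackMass_lt_one (hσμ : 1 / √(2 * Real.pi) < σμ) (θ : ℝ) :
    deriv (attackMass αp σμ xc m) θ < 1 := by
  have hσμ_pos : 0 < σμ := lt_of_le_of_lt (by positivity) hσμ
  rw [(hasDerivAt_attackMass αp σμ xc m θ).deriv, mul_one_div, div_lt_one hσμ_pos]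
  refine (gaussianPDFReal_le_inv_sqrt 0 1 _).trans_lt ?_
  simpa only [NNReal.coe_one, mul_one, one_div] using hσμ

theorem existsUnique_isFixedPt_attackMass (hσμ : 1 / √(2 * Real.pi) < σμ) :
    ∃! θ, IsFixedPt (attackMass αp σμ xc m) θ := by
  have hdiff := differentiable_attackMass αp σμ xc m
  obtain ⟨θ, -, hθ⟩ := exists_mem_Ioo_isFixedPt hdiff.continuous.continuousOn zero_le_one
    (attackMass_mem_Ioo αp σμ xc m 0).1 (attackMass_mem_Ioo αp σμ xc m 1).2
  have hunique := subsingleton_fixedPoints_of_deriv_ne_one hdiff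
    fun x ↦ (deriv_attackMass_lt_one αp xc m hσμ x).ne
  exact ⟨θ, hθ, fun θ' hθ' ↦ hunique hθ' hθ⟩

theorem exists_isFixedPt_attackMass_one_lt_deriv (hσμ_pos : 0 < σμ)
    (hσμ : σμ < 1 / √(2 * Real.pi)) :
    ∃ m θ, IsFixedPt (attackMass αp σμ xc m) θ ∧ 1 < deriv (attackMass αp σμ xc m) θ := by
  have hcentre : (1 / σμ) * (-xc / √αp + stdNormalCDF 0
      - (-xc / √αp + stdNormalCDF 0)) = 0 := by
    rw [sub_self, mul_zero]
  refine ⟨-xc / √αp + stdNormalCDF 0, stdNormalCDF 0, congrArg stdNormalCDF hcentre, ?_⟩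
  rw [(hasDerivAt_attackMass _ _ _ _ _).deriv, hcentre, gaussianPDFReal_self, mul_one_div,
    one_lt_div hσμ_pos]
  simpa only [NNReal.coe_one, mul_one, one_div] using hσμ

theorem exists_three_isFixedPt_attackMass (hσμ_pos : 0 < σμ)
    (hσμ : σμ < 1 / √(2 * Real.pi)) :
    ∃ m θ₁ θ₂ θ₃, θ₁ < θ₂ ∧ θ₂ < θ₃ ∧ IsFixedPt (attackMass αp σμ xc m) θ₁ ∧
      IsFixedPt (attackMass αp σμ xc m) θ₂ ∧ IsFixedPt (attackMass αp σμ xc m) θ₃ := by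
  obtain ⟨m, θ₂, h₂, hderiv⟩ := exists_isFixedPt_attackMass_one_lt_deriv αp xc hσμ_pos hσμ
  obtain ⟨⟨θ₁, hθ₁, h₁⟩, ⟨θ₃, hθ₃, h₃⟩⟩ := exists_isFixedPt_lt_and_gt_of_one_lt_deriv
    (differentiable_attackMass αp σμ xc m).continuous.continuousOn
    (attackMass_mem_Ioo αp σμ xc m 0).1 (attackMass_mem_Ioo αp σμ xc m 1).2
    (mem_Ioo_of_isFixedPt_attackMass h₂) h₂ hderiv
  exact ⟨m, θ₁, θ₂, θ₃, hθ₁.2, hθ₃.1, h₁, h₂, h₃⟩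

end AttackMass

theorem stmt_5 (αp σμ : ℝ) (hαp : 0 < αp) (hσμ : 0 < σμ) :
    (σμ > 1 / Real.sqrt (2 * Real.pi) →
      ∀ xc m : ℝ,
        ∃ θ ∈ Set.Ioo (0 : ℝ) 1,
          stdNormalCDF ((1 / σμ) * (-xc / Real.sqrt αp + θ - m)) = θ ∧
          ∀ θ' : ℝ,
            stdNormalCDF ((1 / σμ) * (-xc / Real.sqrt αp + θ' - m)) = θ' → θ' = θ) ∧
    (σμ < 1 / Real.sqrt (2 * Real.pi) →
      ∃ xc m : ℝ, ∃ θ₁ θ₂ θ₃ : ℝ,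
        θ₁ ∈ Set.Ioo (0 : ℝ) 1 ∧ θ₂ ∈ Set.Ioo (0 : ℝ) 1 ∧ θ₃ ∈ Set.Ioo (0 : ℝ) 1 ∧
        θ₁ ≠ θ₂ ∧ θ₁ ≠ θ₃ ∧ θ₂ ≠ θ₃ ∧
        stdNormalCDF ((1 / σμ) * (-xc / Real.sqrt αp + θ₁ - m)) = θ₁ ∧
        stdNormalCDF ((1 / σμ) * (-xc / Real.sqrt αp + θ₂ - m)) = θ₂ ∧
        stdNormalCDF ((1 / σμ) * (-xc / Real.sqrt αp + θ₃ - m)) = θ₃) := by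
  refine ⟨fun hlarge xc m ↦ ?_, fun hsmall ↦ ?_⟩
  · obtain ⟨θ, hθ, hunique⟩ := existsUnique_isFixedPt_attackMass αp xc m hlarge
    exact ⟨θ, mem_Ioo_of_isFixedPt_attackMass hθ, hθ, hunique⟩
  · obtain ⟨m, θ₁, θ₂, θ₃, h₁₂, h₂₃, h₁, h₂, h₃⟩ :=
      exists_three_isFixedPt_attackMass αp 0 hσμ hsmall
    exact ⟨0, m, θ₁, θ₂, θ₃, mem_Ioo_of_isFixedPt_attackMass h₁,
      mem_Ioo_of_isFixedPt_attackMass h₂, mem_Ioo_of_isFixedPt_attackMass h₃,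
      h₁₂.ne, (h₁₂.trans h₂₃).ne, h₂₃.ne, h₁, h₂, h₃⟩
end
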